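/- arXiv:1101.1995 — 2 statements merged into one kernel-verified Lean document; each statement's English description precedes it below -/
import Mathlib

section
/- Let m ≥ 1 and N ≥ 1 be integers, let a < b be real numbers, set θ = (b−a)/N, and let f : ℝ → ℝ be (2m+2)-times continuously differentiable on [a,b]. Then there exists ξ ∈ (a,b) such that ∫_a^b f(x) dx = (θ/2)[f(a) + 2∑_{k=1}^{N−1} f(a+kθ) + f(b)] − ∑_{l=1}^{m} (B_{2l}/(2l)!) θ^{2l} (f^{(2l−1)}(b) − f^{(2l−1)}(a)) − (B_{2m+2}/(2m+2)!) N θ^{2m+3} f^{(2m+2)}(ξ), where B_k denotes the k-th Bernoulli number. -/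
open MeasureTheory in
/-- Weighted mean value theorem on the open unit interval, strictly positive weight. -/
theorem em_mvt (w H : ℝ → ℝ) (hw : Continuous w) (hwpos : ∀ t ∈ Set.Ioo (0:ℝ) 1, 0 < w t)
    (hH : ContinuousOn H (Set.Icc 0 1)) :
    ∃ t ∈ Set.Ioo (0:ℝ) 1, ∫ x in (0:ℝ)..1, w x * H x = (∫ x in (0:ℝ)..1, w x) * H t := by
  have hI : 0 < ∫ x in (0:ℝ)..1, w x :=
    intervalIntegral.intervalIntegral_pos_of_pos_on (hw.intervalIntegrable _ _) hwpos one_pos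
  set I := ∫ x in (0:ℝ)..1, w x with hIdef
  set C := (∫ x in (0:ℝ)..1, w x * H x) / I with hC
  have hH' : ContinuousOn H (Set.uIcc 0 1) := by rwa [Set.uIcc_of_le zero_le_one]
  have hint : IntervalIntegrable (fun x => w x * H x) volume 0 1 :=
    (hw.continuousOn.mul hH').intervalIntegrable
  have hzero : ∫ x in (0:ℝ)..1, w x * (H x - C) = 0 := by
    have : ∀ x, w x * (H x - C) = w x * H x - w x * C := fun x => by ring
    simp_rw [this]
    rw [intervalIntegral.integral_sub hint ((hw.intervalIntegrable _ _).mul_const C),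
      intervalIntegral.integral_mul_const, hC]
    field_simp
    ring
  have hint2 : IntervalIntegrable (fun x => w x * (H x - C)) volume 0 1 :=
    (hw.continuousOn.mul (hH'.sub continuousOn_const)).intervalIntegrable
  have h1 : ∃ x ∈ Set.Ioo (0:ℝ) 1, H x ≤ C := by
    by_contra! hcon
    have := intervalIntegral.intervalIntegral_pos_of_pos_on hint2
      (fun x hx => mul_pos (hwpos x hx) (sub_pos.2 (hcon x hx))) one_pos
    linarith
  have h2 : ∃ x ∈ Set.Ioo (0:ℝ) 1, C ≤ H x := by
    by_contra! hcon
    have := intervalIntegral.intervalIntegral_pos_of_pos_on hint2.neg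
      (fun x hx => by
        have := mul_pos (hwpos x hx) (sub_pos.2 (hcon x hx))
        simp only [Pi.neg_apply]
        nlinarith) one_pos
    simp only [Pi.neg_apply, intervalIntegral.integral_neg] at this
    linarith
  obtain ⟨x, hx, hx'⟩ := h1
  obtain ⟨y, hy, hy'⟩ := h2
  obtain ⟨t, ht, htC⟩ := isPreconnected_Ioo.intermediate_value hx hy
    (hH.mono Set.Ioo_subset_Icc_self) ⟨hx', hy'⟩
  refine ⟨t, ht, ?_⟩
  rw [htC, hC]
  field_simp

open Real in
/-- The even Bernoulli kernel has a strict constant sign. -/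
theorem em_sign (k : ℕ) (hk : k ≠ 0) : ∀ t ∈ Set.Ioo (0:ℝ) 1,
    0 < (-1 : ℝ) ^ (k + 1) * ((bernoulli (2 * k) : ℝ) - bernoulliFun (2 * k) t) := by
  intro t ht
  have ha := hasSum_one_div_nat_pow_mul_cos hk (Set.Ioo_subset_Icc_self ht)
  have hb := hasSum_one_div_nat_pow_mul_cos hk (x := 0) (by simp)
  have hlt := hasSum_lt (i := 1) (fun n => ?_) ?_ ha hb
  · change _ * bernoulliFun (2 * k) t < _ * bernoulliFun (2 * k) 0 at hlt
    rw [bernoulliFun_eval_zero] at hlt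
    have hc : 0 < (2 * π) ^ (2 * k) / 2 / ((2 * k).factorial : ℝ) := by positivity
    have : 0 < ((2 * π) ^ (2 * k) / 2 / ((2 * k).factorial : ℝ)) *
        ((-1 : ℝ) ^ (k + 1) * ((bernoulli (2 * k) : ℝ) - bernoulliFun (2 * k) t)) := by
      have h3 := sub_pos.2 hlt
      convert h3 using 1
      ring
    exact pos_of_mul_pos_right this hc.le
  · simp only [mul_zero, cos_zero]
    exact mul_le_mul_of_nonneg_left (cos_le_one _) (by positivity)
  · simp only [mul_zero, cos_zero, Nat.cast_one, one_pow, div_one, one_mul, mul_one]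
    refine lt_of_le_of_ne (cos_le_one _) fun h => ?_
    obtain ⟨n, hn⟩ := (cos_eq_one_iff _).1 h
    have hn' : (n : ℝ) = t := by
      have := pi_pos
      apply mul_right_cancel₀ (b := 2 * π) (by positivity)
      linarith
    have h1 : (0 : ℝ) < n := hn' ▸ ht.1
    have h2 : (n : ℝ) < 1 := hn' ▸ ht.2
    norm_cast at h1 h2
    omega

open MeasureTheory in
theorem em_step (n : ℕ) (H : ℕ → ℝ → ℝ)
    (hc : ContinuousOn (H n) (Set.Icc 0 1)) (hc' : ContinuousOn (H (n + 1)) (Set.Icc 0 1))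
    (hd : ∀ x ∈ Set.Ioo (0:ℝ) 1, HasDerivAt (H n) (H (n + 1) x) x) :
    (∫ x in (0:ℝ)..1, bernoulliFun n x * H n x) / (n.factorial : ℝ) =
      (bernoulliFun (n + 1) 1 * H n 1 - bernoulliFun (n + 1) 0 * H n 0) / ((n + 1).factorial : ℝ)
      - (∫ x in (0:ℝ)..1, bernoulliFun (n + 1) x * H (n + 1) x) / ((n + 1).factorial : ℝ) := by
  rw [← Set.uIcc_of_le zero_le_one] at hc hc'
  have key := intervalIntegral.integral_mul_deriv_eq_deriv_mul_of_hasDerivAt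
    (a := 0) (b := 1) (u := H n) (u' := H (n + 1)) (v := fun x => bernoulliFun (n + 1) x / (n + 1))
    (v' := bernoulliFun n) hc
    (((continuous_bernoulliFun (n + 1)).div_const _).continuousOn)
    (by simpa using hd) (fun x _ => antideriv_bernoulliFun n x) hc'.intervalIntegrable
    (intervalIntegrable_bernoulliFun n _ _)
  have e1 : ∀ x, bernoulliFun n x * H n x = H n x * bernoulliFun n x := fun x => mul_comm _ _
  have e2 : ∀ x, H (n + 1) x * (bernoulliFun (n + 1) x / (n + 1)) =
    (bernoulliFun (n + 1) x * H (n + 1) x) / (n + 1) := fun x => by ring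
  simp_rw [e1, key, e2]
  rw [intervalIntegral.integral_div, Nat.factorial_succ]
  push_cast
  have : (n.factorial : ℝ) ≠ 0 := by positivity
  field_simp

theorem em_cell (M : ℕ) (H : ℕ → ℝ → ℝ)
    (hc : ∀ n ≤ M, ContinuousOn (H n) (Set.Icc 0 1))
    (hd : ∀ n < M, ∀ x ∈ Set.Ioo (0:ℝ) 1, HasDerivAt (H n) (H (n + 1) x) x) (p : ℕ)
    (hp : 2 * p + 1 ≤ M) :
    ∫ x in (0:ℝ)..1, H 0 x = (H 0 0 + H 0 1) / 2
      - ∑ l ∈ Finset.Icc 1 p, (bernoulli (2 * l) : ℝ) / (Nat.factorial (2 * l)) *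
          (H (2 * l - 1) 1 - H (2 * l - 1) 0)
      - (∫ x in (0:ℝ)..1, bernoulliFun (2 * p + 1) x * H (2 * p + 1) x) /
          ((2 * p + 1).factorial : ℝ) := by
  have step := fun n (hn : n < M) => em_step n H (hc n hn.le) (hc (n + 1) hn) (hd n hn)
  induction p with
  | zero =>
    have := step 0 (by omega)
    simp at this
    simp [this]
    ring
  | succ p ih =>
    rw [ih (by omega), Finset.sum_Icc_succ_top (by omega)]
    have s1 := step (2 * p + 1) (by omega)
    have s2 := step (2 * p + 2) (by omega)
    rw [bernoulliFun_endpoints_eq_of_ne_one (by omega), bernoulliFun_eval_zero] at s1 s2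
    rw [bernoulli_eq_zero_of_odd (n := 2 * p + 2 + 1) ⟨p + 1, by ring⟩ (by omega)] at s2
    simp only [show 2 * (p + 1) = 2 * p + 2 by ring,
      show 2 * p + 2 - 1 = 2 * p + 1 by omega, show 2 * p + 1 + 1 = 2 * p + 2 by ring] at s1 s2 ⊢
    rw [s1, s2]
    simp
    ring

open MeasureTheory in
theorem em_unit (m : ℕ) (H : ℕ → ℝ → ℝ)
    (hc : ∀ n ≤ 2 * m + 2, ContinuousOn (H n) (Set.Icc 0 1))
    (hd : ∀ n < 2 * m + 2, ∀ x ∈ Set.Ioo (0:ℝ) 1, HasDerivAt (H n) (H (n + 1) x) x) :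
    ∃ t ∈ Set.Ioo (0:ℝ) 1, ∫ x in (0:ℝ)..1, H 0 x = (H 0 0 + H 0 1) / 2
      - ∑ l ∈ Finset.Icc 1 m, (bernoulli (2 * l) : ℝ) / (Nat.factorial (2 * l)) *
          (H (2 * l - 1) 1 - H (2 * l - 1) 0)
      - (bernoulli (2 * m + 2) : ℝ) / (Nat.factorial (2 * m + 2)) * H (2 * m + 2) t := by
  set s : ℝ := (-1) ^ (m + 1 + 1) with hs
  have hss : s * s = 1 := by rw [hs, ← mul_pow]; simp
  have hcB := continuous_bernoulliFun (2 * m + 2)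
  have hB0 := integral_bernoulliFun_eq_zero (k := 2 * m + 2) (by omega)
  have hcH := hc (2 * m + 2) le_rfl
  obtain ⟨t, ht, h⟩ := em_mvt
    (fun x => s * ((bernoulli (2 * m + 2) : ℝ) - bernoulliFun (2 * m + 2) x)) (H (2 * m + 2))
    (by fun_prop) (fun t ht => em_sign (m + 1) (by omega) t ht) hcH
  refine ⟨t, ht, ?_⟩
  rw [em_cell _ H hc hd m (by omega)]
  congr 1
  rw [em_step (2 * m + 1) H (hc _ (by omega)) (hc _ (by omega)) (hd _ (by omega)),
    bernoulliFun_endpoints_eq_of_ne_one (by omega), bernoulliFun_eval_zero]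
  have hcH' : ContinuousOn (H (2 * m + 2)) (Set.uIcc 0 1) := by rwa [Set.uIcc_of_le zero_le_one]
  have hftc : ∫ x in (0:ℝ)..1, H (2 * m + 2) x = H (2 * m + 1) 1 - H (2 * m + 1) 0 :=
    intervalIntegral.integral_eq_sub_of_hasDerivAt_of_le zero_le_one (hc _ (by omega))
      (hd _ (by omega)) hcH'.intervalIntegrable
  have e : ∀ x, s * ((bernoulli (2 * m + 2) : ℝ) - bernoulliFun (2 * m + 2) x) * H (2 * m + 2) x =
    s * (bernoulli (2 * m + 2) * H (2 * m + 2) x - bernoulliFun (2 * m + 2) x * H (2 * m + 2) x) :=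
    fun x => by ring
  simp_rw [e] at h
  rw [intervalIntegral.integral_const_mul, intervalIntegral.integral_const_mul,
    intervalIntegral.integral_sub (hcH'.intervalIntegrable.const_mul _)
      (hcH'.intervalIntegrable.continuousOn_mul hcB.continuousOn),
    intervalIntegral.integral_sub (by simp) (hcB.intervalIntegrable _ _),
    intervalIntegral.integral_const_mul, hftc, hB0] at h
  simp only [intervalIntegral.integral_const, sub_zero, smul_eq_mul, one_mul] at h
  have h' := congrArg (fun z => s * z) h
  simp only [← mul_assoc, hss, one_mul] at h'
  rw [← sub_div, ← mul_sub]
  simp only [show 2 * m + 1 + 1 = 2 * m + 2 by ring]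
  rw [h']
  ring

/-- **Euler–Maclaurin quadrature formula with remainder.**
For integers `m ≥ 1`, `N ≥ 1`, reals `a < b`, `θ = (b - a)/N`, and `f` a `(2m+2)`-times
continuously differentiable function on `[a, b]`, there exists `ξ ∈ (a, b)` such that
`∫_a^b f = (θ/2)(f a + 2 ∑_{k=1}^{N-1} f (a + kθ) + f b)
  - ∑_{l=1}^m (B_{2l}/(2l)!) θ^{2l} (f^{(2l-1)}(b) - f^{(2l-1)}(a))
  - (B_{2m+2}/(2m+2)!) N θ^{2m+3} f^{(2m+2)}(ξ)`. -/
theorem euler_maclaurin_quadrature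
    (m N : ℕ) (hm : 1 ≤ m) (hN : 1 ≤ N) (a b : ℝ) (hab : a < b)
    (f : ℝ → ℝ) (hf : ContDiffOn ℝ ((2 * m + 2 : ℕ) : ℕ∞) f (Set.Icc a b)) :
    ∃ ξ ∈ Set.Ioo a b,
      ∫ x in a..b, f x =
        ((b - a) / N) / 2 *
            (f a + 2 * ∑ k ∈ Finset.Icc 1 (N - 1), f (a + k * ((b - a) / N)) + f b)
          - ∑ l ∈ Finset.Icc 1 m,
              (bernoulli (2 * l) : ℝ) / (Nat.factorial (2 * l)) * ((b - a) / N) ^ (2 * l) *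
                (iteratedDerivWithin (2 * l - 1) f (Set.Icc a b) b -
                  iteratedDerivWithin (2 * l - 1) f (Set.Icc a b) a)
          - (bernoulli (2 * m + 2) : ℝ) / (Nat.factorial (2 * m + 2)) * N *
              ((b - a) / N) ^ (2 * m + 3) *
              iteratedDerivWithin (2 * m + 2) f (Set.Icc a b) ξ := by
  have hN0 : (0 : ℝ) < N := by exact_mod_cast hN
  set θ : ℝ := (b - a) / N with hθ
  have hθ0 : 0 < θ := div_pos (sub_pos.2 hab) hN0
  have hNθ : N * θ = b - a := by rw [hθ]; field_simp
  set G : ℕ → ℝ → ℝ := fun j => iteratedDerivWithin j f (Set.Icc a b) with hG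
  have hu := uniqueDiffOn_Icc hab
  have hGc : ∀ n ≤ 2 * m + 2, ContinuousOn (G n) (Set.Icc a b) := fun n hn =>
    hf.continuousOn_iteratedDerivWithin (by exact_mod_cast hn) hu
  have hGd : ∀ n < 2 * m + 2, ∀ x ∈ Set.Ioo a b, HasDerivAt (G n) (G (n + 1) x) x := by
    intro n hn x hx
    have h1 := (hf.differentiableOn_iteratedDerivWithin (m := n) (by exact_mod_cast hn) hu) x
      (Set.Ioo_subset_Icc_self hx)
    have h2 := h1.hasDerivWithinAt.hasDerivAt (Icc_mem_nhds hx.1 hx.2)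
    simp only [hG]
    rwa [iteratedDerivWithin_succ]
  have hG0 : G 0 = f := by simp [hG]
  have hmem : ∀ k ∈ Finset.range N, ∀ t ∈ Set.Icc (0:ℝ) 1,
      θ * t + (a + k * θ) ∈ Set.Icc a b := by
    intro k hk t ht
    have hk' : (k : ℝ) + 1 ≤ N := by exact_mod_cast Finset.mem_range.1 hk
    have hk0 : (0 : ℝ) ≤ k := k.cast_nonneg
    constructor
    · nlinarith [mul_nonneg hθ0.le ht.1, mul_nonneg hk0 hθ0.le]
    · nlinarith [mul_le_mul_of_nonneg_right hk' hθ0.le, mul_le_mul_of_nonneg_left ht.2 hθ0.le]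
  have hmem' : ∀ k ∈ Finset.range N, ∀ t ∈ Set.Ioo (0:ℝ) 1,
      θ * t + (a + k * θ) ∈ Set.Ioo a b := by
    intro k hk t ht
    have hk' : (k : ℝ) + 1 ≤ N := by exact_mod_cast Finset.mem_range.1 hk
    have hk0 : (0 : ℝ) ≤ k := k.cast_nonneg
    constructor
    · nlinarith [mul_pos hθ0 ht.1, mul_nonneg hk0 hθ0.le]
    · nlinarith [mul_le_mul_of_nonneg_right hk' hθ0.le, mul_lt_mul_of_pos_left ht.2 hθ0]
  set H : ℕ → ℝ → ℝ := fun j t => θ ^ j * ∑ k ∈ Finset.range N, G j (θ * t + (a + k * θ)) with hH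
  have hHc : ∀ n ≤ 2 * m + 2, ContinuousOn (H n) (Set.Icc 0 1) := by
    intro n hn
    refine continuousOn_const.mul (continuousOn_finsetSum _ fun k hk => ?_)
    exact (hGc n hn).comp (by fun_prop) (fun t ht => hmem k hk t ht)
  have hHd : ∀ n < 2 * m + 2, ∀ x ∈ Set.Ioo (0:ℝ) 1, HasDerivAt (H n) (H (n + 1) x) x := by
    intro n hn x hx
    have h1 : ∀ k ∈ Finset.range N, HasDerivAt (fun t => G n (θ * t + (a + k * θ)))
        (G (n + 1) (θ * x + (a + k * θ)) * θ) x := by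
      intro k hk
      have hl : HasDerivAt (fun t : ℝ => θ * t + (a + k * θ)) θ x := by
        simpa using ((hasDerivAt_id x).const_mul θ).add_const (a + k * θ)
      exact HasDerivAt.comp x (hGd n hn _ (hmem' k hk x hx)) hl
    have h2 := (HasDerivAt.fun_sum h1).const_mul (θ ^ n)
    have h3 : H (n + 1) x =
        θ ^ n * ∑ k ∈ Finset.range N, G (n + 1) (θ * x + (a + k * θ)) * θ := by
      change θ ^ (n + 1) * ∑ k ∈ Finset.range N, G (n + 1) (θ * x + (a + k * θ)) = _
      rw [← Finset.sum_mul]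
      ring
    rw [h3]
    exact h2
  obtain ⟨t, ht, h⟩ := em_unit m H hHc hHd
  -- the mean of the values of the top derivative is a value
  obtain ⟨ξ, hξ, hξv⟩ : ∃ ξ ∈ Set.Ioo a b,
      ∑ k ∈ Finset.range N, G (2 * m + 2) (θ * t + (a + k * θ)) = N * G (2 * m + 2) ξ := by
    have hconv : Convex ℝ (G (2 * m + 2) '' Set.Ioo a b) :=
      (isPreconnected_Ioo.image _
        ((hGc _ le_rfl).mono Set.Ioo_subset_Icc_self)).ordConnected.convex
    have := hconv.sum_mem (t := Finset.range N) (w := fun _ => (N : ℝ)⁻¹)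
      (z := fun k => G (2 * m + 2) (θ * t + (a + k * θ))) (fun _ _ => by positivity)
      (by simp; field_simp) (fun k hk => ⟨_, hmem' k hk t ht, rfl⟩)
    obtain ⟨ξ, hξ, e⟩ := this
    refine ⟨ξ, hξ, ?_⟩
    rw [e, ← Finset.smul_sum, smul_eq_mul]
    field_simp
  refine ⟨ξ, hξ, ?_⟩
  -- integral
  have hint : θ * ∫ x in (0:ℝ)..1, H 0 x = ∫ x in a..b, f x := by
    simp only [hH, hG0, pow_zero, one_mul]
    have hfc : ContinuousOn f (Set.Icc a b) := hf.continuousOn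
    rw [intervalIntegral.integral_finsetSum, Finset.mul_sum]
    · have e : ∀ k ∈ Finset.range N, θ * ∫ x in (0:ℝ)..1, f (θ * x + (a + k * θ)) =
          ∫ x in (fun k : ℕ => a + k * θ) k..(fun k : ℕ => a + k * θ) (k + 1), f x := by
        intro k _
        rw [intervalIntegral.mul_integral_comp_mul_add]
        congr 1
        · ring
        · push_cast; ring
      rw [Finset.sum_congr rfl e, intervalIntegral.sum_integral_adjacent_intervals]
      · simp [hNθ]
      · intro k hk
        apply ContinuousOn.intervalIntegrable
        apply hfc.mono
        have h0 := hmem k (Finset.mem_range.2 hk) 0 (by simp)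
        have h1 := hmem k (Finset.mem_range.2 hk) 1 (by simp)
        apply Set.uIcc_subset_Icc
        · simpa using h0
        · convert h1 using 1
          push_cast; ring
    · intro k hk
      apply ContinuousOn.intervalIntegrable
      rw [Set.uIcc_of_le zero_le_one]
      exact hfc.comp (by fun_prop) (fun t ht => hmem k hk t ht)
  -- telescoping
  have htel : ∀ j, H j 1 - H j 0 = θ ^ j * (G j b - G j a) := by
    intro j
    simp only [hH]
    rw [← mul_sub, ← Finset.sum_sub_distrib]
    congr 1
    have := Finset.sum_range_sub (fun k : ℕ => G j (a + k * θ)) N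
    simp only [hNθ, Nat.cast_zero, zero_mul, add_zero] at this
    rw [add_sub_cancel] at this
    rw [← this]
    refine Finset.sum_congr rfl fun k _ => ?_
    congr 2
    · push_cast; ring
    · ring
  have hends : H 0 0 + H 0 1 = f a + 2 * ∑ k ∈ Finset.Icc 1 (N - 1), f (a + k * θ) + f b := by
    have h1 := htel 0
    have h0 : H 0 0 = f a + ∑ k ∈ Finset.Icc 1 (N - 1), f (a + k * θ) := by
      simp only [hH, hG0, pow_zero, one_mul, mul_zero, zero_add]
      obtain ⟨n, rfl⟩ : ∃ n, N = n + 1 := ⟨N - 1, by omega⟩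
      rw [Finset.range_eq_Ico, Finset.sum_eq_sum_Ico_succ_bot (by omega)]
      simp only [Nat.cast_zero, zero_mul, add_zero]
      rfl
    rw [hG0] at h1
    simp only [pow_zero, one_mul] at h1
    linarith
  rw [← hint, h, hends]
  simp only [htel]
  have hlast : H (2 * m + 2) t = θ ^ (2 * m + 2) * (N * G (2 * m + 2) ξ) := by
    rw [← hξv]
  rw [hlast, mul_sub, mul_sub]
  congr 1
  · congr 1
    · ring
    · rw [Finset.mul_sum]
      refine Finset.sum_congr rfl fun l hl => ?_
      obtain ⟨q, rfl⟩ : ∃ q, l = q + 1 := ⟨l - 1, by have := (Finset.mem_Icc.1 hl).1; omega⟩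
      simp only [show 2 * (q + 1) - 1 = 2 * q + 1 by omega]
      ring
  · ring
end

section
/- Let n ≥ 3 be an integer, let V : ℝ → ℝ be infinitely differentiable with all derivatives bounded on ℝ, let μ > 0, and consider the Lagrangian L(x,v) = (1/2) μ v² − V(x), whose Euler–Lagrange equation is μ q̈ = −V'(q), i.e. q̈ = f(q) with f = −V'/μ. Let q : ℝ → ℝ be an infinitely differentiable solution of q̈ = f(q) all of whose derivatives are bounded on ℝ. Suppose that for each h ∈ (0,1] there is a real polynomial q_d^h of degree at most 2n−1 with q_d^h(0) = q(0), q_d^h(h) = q(h), and satisfying the prolongation-collocation conditions (q_d^h)^{(j)}(τ) = F_j(q_d^h(τ), (q̇_d^h)(τ)) for j = 2,…,n and τ ∈ {0,h}, and suppose there is a constant K > 0, independent of h, such that |(q_d^h)^{(j)}(τ) − q^{(j)}(τ)| ≤ K h^{2n−1} for all j = 1,…,n, τ ∈ {0,h}, and h ∈ (0,1]. Define the prolongation-collocation discrete Lagrangian L_d(h) = (h/2)[ L(q_d^h(0), q̇_d^h(0)) + L(q_d^h(h), q̇_d^h(h)) ] − ∑_{l=1}^{⌊n/2⌋} (B_{2l}/(2l)!)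 h^{2l} [ (d^{2l−1}/dt^{2l−1}) L(q_d^h(t), q̇_d^h(t)) |_{t=h} − (d^{2l−1}/dt^{2l−1}) L(q_d^h(t), q̇_d^h(t)) |_{t=0} ]. Then there exist constants C > 0 and h₀ ∈ (0,1] such that for all 0 < h ≤ h₀, | L_d(h) − ∫_0^h L(q(t), q̇(t)) dt | ≤ C h^{2⌊n/2⌋ + 3}; that is, L_d approximates the exact discrete Lagrangian L_d^E(q(0), q(h), h) = ∫_0^h L(q(t), q̇(t)) dt to order h^{2⌊n/2⌋+3}. -/
/-- The prolongation functions of `f : ℝ → ℝ`: `prolong f k` represents `F_{k+2}`, defined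
recursively by `F_2 (x, v) = f x` and
`F_{j+1} (x, v) = v ∂F_j/∂x (x, v) + f x ∂F_j/∂v (x, v)`. -/
noncomputable def prolong (f : ℝ → ℝ) : ℕ → ℝ → ℝ → ℝ
  | 0, x, _ => f x
  | (k + 1), x, v =>
      v * deriv (fun y => prolong f k y v) x + f x * deriv (fun w => prolong f k x w) v

/-- The Lagrangian `L(x, v) = (1/2) μ v² - V(x)` evaluated along the polynomial curve `P`,
as a function of time: `t ↦ L(P(t), Ṗ(t))`. -/
noncomputable def lagrangianAlong (μ : ℝ) (V : ℝ → ℝ) (P : Polynomial ℝ) (t : ℝ) : ℝ :=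
  1 / 2 * μ * ((Polynomial.derivative P).eval t) ^ 2 - V (P.eval t)

/-- The prolongation-collocation discrete Lagrangian built from the degree-`(2n-1)` Hermite
prolongation-collocation polynomial `qd h` and the `⌊n/2⌋`-term Euler–Maclaurin quadrature. -/
noncomputable def discreteLagrangianEM (n : ℕ) (μ : ℝ) (V : ℝ → ℝ)
    (qd : ℝ → Polynomial ℝ) (h : ℝ) : ℝ :=
  h / 2 * (lagrangianAlong μ V (qd h) 0 + lagrangianAlong μ V (qd h) h) -
    ∑ l ∈ Finset.Icc 1 (n / 2),
      (bernoulli (2 * l) : ℝ) / (Nat.factorial (2 * l)) * h ^ (2 * l) *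
        (iteratedDeriv (2 * l - 1) (lagrangianAlong μ V (qd h)) h -
          iteratedDeriv (2 * l - 1) (lagrangianAlong μ V (qd h)) 0)

/-- Integral terms in the one-panel Euler–Maclaurin expansion on `[0,1]`. -/
noncomputable def emI (G : ℝ → ℝ) (k : ℕ) : ℝ :=
  ∫ t in (0:ℝ)..1, bernoulliFun k t / (k.factorial : ℝ) * iteratedDeriv k G t

theorem emI_step (G : ℝ → ℝ) (hG : ContDiff ℝ (⊤ : ℕ∞) G) (k : ℕ) :
    emI G k = bernoulliFun (k + 1) 1 / ((k + 1).factorial : ℝ) * iteratedDeriv k G 1 -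
      bernoulliFun (k + 1) 0 / ((k + 1).factorial : ℝ) * iteratedDeriv k G 0 - emI G (k + 1) := by
  have hd : ∀ t : ℝ, HasDerivAt (fun s => bernoulliFun (k + 1) s / ((k + 1).factorial : ℝ))
      (bernoulliFun k t / (k.factorial : ℝ)) t := by
    intro t
    have h := (hasDerivAt_bernoulliFun (k + 1) t).div_const ((k + 1).factorial : ℝ)
    refine h.congr_deriv ?_
    have : (k.factorial : ℝ) ≠ 0 := by positivity
    rw [Nat.factorial_succ]
    push_cast
    field_simp
  have hg : ∀ t : ℝ, HasDerivAt (iteratedDeriv k G) (iteratedDeriv (k + 1) G t) t := by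
    intro t
    rw [iteratedDeriv_succ]
    have : Differentiable ℝ (iteratedDeriv k G) :=
      hG.differentiable_iteratedDeriv k (by exact_mod_cast WithTop.coe_lt_top _)
    exact (this t).hasDerivAt
  have hc : ∀ j : ℕ, Continuous (iteratedDeriv j G) := fun j =>
    hG.continuous_iteratedDeriv j (by exact_mod_cast le_top)
  have key := intervalIntegral.integral_deriv_mul_eq_sub (a := (0:ℝ)) (b := 1)
    (fun t _ => hd t) (fun t _ => hg t)
    (((continuous_bernoulliFun k).div_const _).intervalIntegrable _ _)
    ((hc (k + 1)).intervalIntegrable _ _)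
  rw [intervalIntegral.integral_add] at key
  · unfold emI
    linarith
  · exact (((continuous_bernoulliFun k).div_const _).mul (hc k)).intervalIntegrable _ _
  · exact (((continuous_bernoulliFun (k+1)).div_const _).mul (hc (k+1))).intervalIntegrable _ _

theorem em_identity (G : ℝ → ℝ) (hG : ContDiff ℝ (⊤ : ℕ∞) G) (m : ℕ) :
    1 / 2 * (G 0 + G 1) - ∑ l ∈ Finset.Icc 1 m,
      (bernoulli (2 * l) : ℝ) / (Nat.factorial (2 * l)) *
        (iteratedDeriv (2 * l - 1) G 1 - iteratedDeriv (2 * l - 1) G 0) -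
      ∫ t in (0:ℝ)..1, G t = emI G (2 * m + 1) := by
  induction m with
  | zero =>
    have h := emI_step G hG 0
    have h0 : emI G 0 = ∫ t in (0:ℝ)..1, G t := by simp [emI]
    rw [h0] at h
    simp at h ⊢
    linarith
  | succ m ih =>
    rw [Finset.sum_Icc_succ_top (by omega)]
    have h1 := emI_step G hG (2 * m + 1)
    have h2 := emI_step G hG (2 * m + 2)
    rw [bernoulliFun_endpoints_eq_of_ne_one (by omega), bernoulliFun_eval_zero] at h1 h2
    rw [bernoulli_eq_zero_of_odd (n := 2 * m + 2 + 1) ⟨m + 1, by ring⟩ (by omega)] at h2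
    have e1 : 2 * (m + 1) - 1 = 2 * m + 1 := by omega
    have e2 : 2 * (m + 1) = 2 * m + 1 + 1 := by ring
    rw [e1, e2]
    simp only [Rat.cast_zero, zero_div, zero_mul, sub_zero, zero_sub] at h2
    have e3 : 2 * m + 1 + 1 = 2 * m + 2 := rfl
    rw [e3] at *
    linarith

theorem emI_bound (k : ℕ) (hk : 1 ≤ k) : ∃ C : ℝ, 0 ≤ C ∧ ∀ G : ℝ → ℝ, ContDiff ℝ (⊤ : ℕ∞) G →
    ∀ M : ℝ, (∀ t ∈ Set.Icc (0:ℝ) 1, |iteratedDeriv (k + 1) G t| ≤ M) → |emI G k| ≤ C * M := by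
  obtain ⟨D, hD⟩ := isCompact_Icc.exists_bound_of_continuousOn
    ((continuous_bernoulliFun (k+1)).div_const ((k+1).factorial : ℝ)).continuousOn
    (s := Set.Icc (0:ℝ) 1)
  have hD0 : 0 ≤ D := (norm_nonneg _).trans (hD 0 (by simp))
  refine ⟨D + D, by positivity, fun G hG M hM => ?_⟩
  have hM0 : 0 ≤ M := (abs_nonneg _).trans (hM 0 (by simp))
  rw [emI_step G hG k, bernoulliFun_endpoints_eq_of_ne_one (by omega)]
  have hI : |emI G (k + 1)| ≤ D * M := by
    have := intervalIntegral.norm_integral_le_of_norm_le_const (a := (0:ℝ)) (b := 1)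
      (f := fun t => bernoulliFun (k+1) t / ((k+1).factorial : ℝ) * iteratedDeriv (k+1) G t)
      (C := D * M) (by
        intro t ht
        rw [Set.uIoc_of_le zero_le_one] at ht
        have ht' : t ∈ Set.Icc (0:ℝ) 1 := ⟨ht.1.le, ht.2⟩
        rw [norm_mul]
        exact mul_le_mul (hD t ht') (hM t ht') (norm_nonneg _) hD0)
    simpa [emI] using this
  have hΔ : |iteratedDeriv k G 1 - iteratedDeriv k G 0| ≤ M := by
    have hdiff : Differentiable ℝ (iteratedDeriv k G) :=
      hG.differentiable_iteratedDeriv k (by exact_mod_cast WithTop.coe_lt_top _)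
    have := (convex_Icc (0:ℝ) 1).norm_image_sub_le_of_norm_deriv_le (f := iteratedDeriv k G)
      (C := M) (x := 0) (y := 1) (fun t _ => hdiff t)
      (fun t ht => by rw [← iteratedDeriv_succ]; exact hM t ht) (by simp) (by simp)
    simpa using this
  have h0 : |bernoulliFun (k+1) 0 / ((k+1).factorial : ℝ)| ≤ D := hD 0 (by simp)
  rw [← mul_sub]
  calc _ ≤ |bernoulliFun (k+1) 0 / ((k+1).factorial : ℝ) *
        (iteratedDeriv k G 1 - iteratedDeriv k G 0)| + |emI G (k+1)| := abs_sub _ _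
    _ ≤ D * M + D * M := by
        rw [abs_mul]
        gcongr
    _ = _ := by ring

theorem em_bound (g : ℝ → ℝ) (hg : ContDiff ℝ (⊤ : ℕ∞) g) (m : ℕ) :
    ∃ C : ℝ, 0 ≤ C ∧ ∀ h : ℝ, 0 < h → h ≤ 1 →
    |h / 2 * (g 0 + g h) - ∑ l ∈ Finset.Icc 1 m,
      (bernoulli (2 * l) : ℝ) / (Nat.factorial (2 * l)) * h ^ (2 * l) *
        (iteratedDeriv (2 * l - 1) g h - iteratedDeriv (2 * l - 1) g 0) -
      ∫ t in (0:ℝ)..h, g t| ≤ C * h ^ (2 * m + 3) := by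
  obtain ⟨C, hC0, hC⟩ := emI_bound (2 * m + 1) (by omega)
  have hc : ∀ j : ℕ, Continuous (iteratedDeriv j g) := fun j =>
    hg.continuous_iteratedDeriv j (by exact_mod_cast le_top)
  obtain ⟨M, hM⟩ := isCompact_Icc.exists_bound_of_continuousOn
    (hc (2 * m + 2)).continuousOn (s := Set.Icc (0:ℝ) 1)
  have hM0 : 0 ≤ M := (norm_nonneg _).trans (hM 0 (by simp))
  refine ⟨C * M, by positivity, fun h h0 h1 => ?_⟩
  have hG : ContDiff ℝ (⊤ : ℕ∞) (fun x => g (h * x)) := hg.comp (contDiff_const.mul contDiff_id)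
  have hder : ∀ k : ℕ, iteratedDeriv k (fun x => g (h * x)) =
      fun x => h ^ k * iteratedDeriv k g (h * x) := fun k =>
    iteratedDeriv_comp_const_mul (hg.of_le (by exact_mod_cast le_top)) h
  have hid := em_identity _ hG m
  have hb := hC _ hG (h ^ (2 * m + 2) * M) (by
    intro t ht
    rw [hder, abs_mul, abs_of_pos (by positivity)]
    gcongr
    refine hM (h * t) ⟨mul_nonneg h0.le ht.1, ?_⟩
    exact mul_le_one₀ h1 ht.1 ht.2)
  have hint : h * ∫ t in (0:ℝ)..1, g (h * t) = ∫ t in (0:ℝ)..h, g t := by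
    simpa using intervalIntegral.mul_integral_comp_mul_left (f := g) (a := 0) (b := 1) (c := h)
  have hrew : h / 2 * (g 0 + g h) - ∑ l ∈ Finset.Icc 1 m,
      (bernoulli (2 * l) : ℝ) / (Nat.factorial (2 * l)) * h ^ (2 * l) *
        (iteratedDeriv (2 * l - 1) g h - iteratedDeriv (2 * l - 1) g 0) -
      ∫ t in (0:ℝ)..h, g t = h * emI (fun x => g (h * x)) (2 * m + 1) := by
    rw [← hid, ← hint, mul_sub, mul_sub, Finset.mul_sum]
    congr 2
    · simp; ring
    · refine Finset.sum_congr rfl fun l hl => ?_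
      have hl1 : 1 ≤ l := (Finset.mem_Icc.mp hl).1
      rw [hder]
      obtain ⟨r, hr⟩ : ∃ r, 2 * l = r + 1 := ⟨2 * l - 1, by omega⟩
      simp only [hr, Nat.add_sub_cancel, mul_one, mul_zero]
      ring
  rw [hrew, abs_mul, abs_of_pos h0]
  calc h * |emI (fun x => g (h * x)) (2 * m + 1)| ≤ h * (C * (h ^ (2 * m + 2) * M)) := by gcongr
    _ = _ := by ring

/-- Two families are close to order `e`, the second being bounded. -/
def Near {ι : Type} (e a b : ι → ℝ) : Prop :=
  ∃ C : ℝ, 0 ≤ C ∧ ∀ i, |b i| ≤ C ∧ |a i - b i| ≤ C * e i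

section
variable {ι : Type} {e : ι → ℝ}

theorem Near.mul (he0 : ∀ i, 0 ≤ e i) (he1 : ∀ i, e i ≤ 1) {a b a' b' : ι → ℝ}
    (h : Near e a b) (h' : Near e a' b') :
    Near e (fun i => a i * a' i) (fun i => b i * b' i) := by
  obtain ⟨C, hC0, hC⟩ := h
  obtain ⟨D, hD0, hD⟩ := h'
  refine ⟨3 * (C * D), by positivity, fun i => ⟨?_, ?_⟩⟩
  · rw [abs_mul]
    have := mul_le_mul (hC i).1 (hD i).1 (abs_nonneg _) hC0
    nlinarith [mul_nonneg hC0 hD0]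
  · have e1 : a i * a' i - b i * b' i =
        (a i - b i) * (a' i - b' i) + b i * (a' i - b' i) + (a i - b i) * b' i := by ring
    rw [e1]
    refine (abs_add_three _ _ _).trans ?_
    simp only [abs_mul]
    have p1 := mul_le_mul (hC i).2 (hD i).2 (abs_nonneg _) (mul_nonneg hC0 (he0 i))
    have p2 := mul_le_mul (hC i).1 (hD i).2 (abs_nonneg _) hC0
    have p3 := mul_le_mul (hC i).2 (hD i).1 (abs_nonneg _) (mul_nonneg hC0 (he0 i))
    have p4 : C * e i * (D * e i) ≤ C * D * e i := by
      have : C * D * e i * e i ≤ C * D * e i * 1 :=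
        mul_le_mul_of_nonneg_left (he1 i) (mul_nonneg (mul_nonneg hC0 hD0) (he0 i))
      nlinarith
    nlinarith

theorem Near.const_mul (c : ℝ) {a b : ι → ℝ} (h : Near e a b) :
    Near e (fun i => c * a i) (fun i => c * b i) := by
  obtain ⟨C, hC0, hC⟩ := h
  refine ⟨|c| * C, by positivity, fun i => ⟨?_, ?_⟩⟩
  · rw [abs_mul]; gcongr; exact (hC i).1
  · rw [← mul_sub, abs_mul, mul_assoc]; gcongr; exact (hC i).2

theorem Near.add {a b a' b' : ι → ℝ}
    (h : Near e a b) (h' : Near e a' b') :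
    Near e (fun i => a i + a' i) (fun i => b i + b' i) := by
  obtain ⟨C, hC0, hC⟩ := h
  obtain ⟨D, hD0, hD⟩ := h'
  refine ⟨C + D, by positivity, fun i => ⟨?_, ?_⟩⟩
  · exact (abs_add_le _ _).trans (add_le_add (hC i).1 (hD i).1)
  · rw [add_sub_add_comm, add_mul]
    exact (abs_add_le _ _).trans (add_le_add (hC i).2 (hD i).2)

theorem Near.sum {s : Finset ℕ} {a b : ℕ → ι → ℝ} (h : ∀ j ∈ s, Near e (a j) (b j)) :
    Near e (fun i => ∑ j ∈ s, a j i) (fun i => ∑ j ∈ s, b j i) := by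
  classical
  induction s using Finset.induction_on with
  | empty => exact ⟨0, le_rfl, by simp⟩
  | insert j s hj ih =>
    simp only [Finset.sum_insert hj]
    exact (h j (by simp)).add (ih fun k hk => h k (by simp [hk]))

theorem Near.deriv_mul (he0 : ∀ i, 0 ≤ e i) (he1 : ∀ i, e i ≤ 1)
    {a a' b b' : ι → ℝ → ℝ} {τ : ι → ℝ} (k : ℕ)
    (ha : ∀ i, ContDiff ℝ (⊤ : ℕ∞) (a i)) (ha' : ∀ i, ContDiff ℝ (⊤ : ℕ∞) (a' i))
    (hb : ∀ i, ContDiff ℝ (⊤ : ℕ∞) (b i)) (hb' : ∀ i, ContDiff ℝ (⊤ : ℕ∞) (b' i))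
    (h : ∀ j ≤ k, Near e (fun i => iteratedDeriv j (a i) (τ i)) (fun i => iteratedDeriv j (b i) (τ i)))
    (h' : ∀ j ≤ k, Near e (fun i => iteratedDeriv j (a' i) (τ i))
      (fun i => iteratedDeriv j (b' i) (τ i))) :
    Near e (fun i => iteratedDeriv k (a i * a' i) (τ i))
      (fun i => iteratedDeriv k (b i * b' i) (τ i)) := by
  have hle : ((k : ℕ) : WithTop ℕ∞) ≤ ((⊤ : ℕ∞) : WithTop ℕ∞) := by exact_mod_cast le_top
  have e1 : (fun i => iteratedDeriv k (a i * a' i) (τ i)) = fun i => ∑ j ∈ Finset.range (k + 1),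
      (k.choose j : ℝ) * iteratedDeriv j (a i) (τ i) * iteratedDeriv (k - j) (a' i) (τ i) := by
    funext i
    exact iteratedDeriv_mul ((ha i).of_le hle).contDiffAt ((ha' i).of_le hle).contDiffAt
  have e2 : (fun i => iteratedDeriv k (b i * b' i) (τ i)) = fun i => ∑ j ∈ Finset.range (k + 1),
      (k.choose j : ℝ) * iteratedDeriv j (b i) (τ i) * iteratedDeriv (k - j) (b' i) (τ i) := by
    funext i
    exact iteratedDeriv_mul ((hb i).of_le hle).contDiffAt ((hb' i).of_le hle).contDiffAt
  rw [e1, e2]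
  refine Near.sum fun j hj => ?_
  have hj' : j ≤ k := by have := Finset.mem_range.mp hj; omega
  exact Near.mul he0 he1 ((h j hj').const_mul _) (h' (k - j) (by omega))

theorem contDiff_deriv_top {f : ℝ → ℝ} (hf : ContDiff ℝ (⊤ : ℕ∞) f) :
    ContDiff ℝ (⊤ : ℕ∞) (deriv f) := by
  exact (contDiff_infty_iff_deriv.mp hf).2

theorem Near.deriv_comp (he0 : ∀ i, 0 ≤ e i) (he1 : ∀ i, e i ≤ 1)
    {p : ι → ℝ → ℝ} {q : ℝ → ℝ} {τ : ι → ℝ} (N : ℕ)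
    (hp : ∀ i, ContDiff ℝ (⊤ : ℕ∞) (p i)) (hq : ContDiff ℝ (⊤ : ℕ∞) q)
    (heq : ∀ i, p i (τ i) = q (τ i))
    (h : ∀ j, 1 ≤ j → j ≤ N → Near e (fun i => iteratedDeriv j (p i) (τ i))
      (fun i => iteratedDeriv j q (τ i))) (k : ℕ) : k ≤ N →
    ∀ W : ℝ → ℝ, ContDiff ℝ (⊤ : ℕ∞) W → (∀ j : ℕ, ∃ M : ℝ, ∀ x : ℝ, |iteratedDeriv j W x| ≤ M) →
    Near e (fun i => iteratedDeriv k (W ∘ p i) (τ i)) (fun i => iteratedDeriv k (W ∘ q) (τ i)) := by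
  induction k using Nat.strong_induction_on with
  | _ k ih =>
  intro hk W hW hWb
  rcases k with _ | k
  · obtain ⟨M, hM⟩ := hWb 0
    simp only [iteratedDeriv_zero] at hM ⊢
    refine ⟨M, (abs_nonneg _).trans (hM 0), fun i => ⟨hM _, ?_⟩⟩
    simp only [Function.comp, heq i, sub_self, abs_zero]
    exact mul_nonneg ((abs_nonneg _).trans (hM 0)) (he0 i)
  · have hchain : ∀ r : ℝ → ℝ, ContDiff ℝ (⊤ : ℕ∞) r →
        deriv (W ∘ r) = (deriv W ∘ r) * deriv r := by
      intro r hr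
      funext t
      exact _root_.deriv_comp t (hW.differentiable (by simp) _) (hr.differentiable (by simp) _)
    have hW' := contDiff_deriv_top hW
    simp only [iteratedDeriv_succ', hchain _ (hp _), hchain _ hq]
    refine Near.deriv_mul he0 he1 (b := fun _ => deriv W ∘ q) (b' := fun _ => deriv q) k
      (fun i => hW'.comp (hp i)) (fun i => contDiff_deriv_top (hp i))
      (fun _ => hW'.comp hq) (fun _ => contDiff_deriv_top hq) ?_ ?_
    · intro j hj
      exact ih j (by omega) (by omega) _ hW' fun l => by
        simpa only [iteratedDeriv_succ'] using hWb (l + 1)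
    · intro j hj
      simpa only [iteratedDeriv_succ'] using h (j + 1) (by omega) (by omega)

end

theorem iteratedDeriv_poly (P : Polynomial ℝ) (j : ℕ) :
    iteratedDeriv j (fun t => P.eval t) = fun t => (Polynomial.derivative^[j] P).eval t := by
  induction j with
  | zero => simp
  | succ j ih =>
    rw [iteratedDeriv_succ, ih, Function.iterate_succ_apply']
    funext t
    exact Polynomial.deriv _

/-- **Variational order of the prolongation-collocation discrete Lagrangian.**
Let `n ≥ 3`, `L(x,v) = (1/2) μ v² - V(x)` with `V` smooth with all derivatives bounded, `μ > 0`,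
and let `q` be a smooth solution of `q̈ = f(q)` (`f = -V'/μ`) with all derivatives bounded.
If `q_d^h` (for `0 < h ≤ 1`) are polynomials of degree at most `2n - 1` with the boundary and
prolongation-collocation conditions at `{0, h}`, whose derivatives of orders `1, …, n` at the
endpoints approximate those of `q` to within `K h^{2n-1}`, then the prolongation-collocation
discrete Lagrangian approximates the exact discrete Lagrangian
`L_d^E(q(0), q(h), h) = ∫_0^h L(q(t), q̇(t)) dt` to order `h^{2⌊n/2⌋ + 3}`. -/
theorem prolongation_collocation_variational_order
    (n : ℕ) (hn : 3 ≤ n)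
    (V : ℝ → ℝ) (hV : ContDiff ℝ (⊤ : ℕ∞) V)
    (hVb : ∀ k : ℕ, ∃ M : ℝ, ∀ x : ℝ, |iteratedDeriv k V x| ≤ M)
    (μ : ℝ) (hμ : 0 < μ)
    (q : ℝ → ℝ) (hq : ContDiff ℝ (⊤ : ℕ∞) q)
    (hode : ∀ t : ℝ, iteratedDeriv 2 q t = -deriv V (q t) / μ)
    (hqb : ∀ k : ℕ, ∃ M : ℝ, ∀ t : ℝ, |iteratedDeriv k q t| ≤ M)
    (qd : ℝ → Polynomial ℝ)
    (hdeg : ∀ h ∈ Set.Ioc (0 : ℝ) 1, (qd h).natDegree ≤ 2 * n - 1)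
    (hbc0 : ∀ h ∈ Set.Ioc (0 : ℝ) 1, (qd h).eval 0 = q 0)
    (hbc1 : ∀ h ∈ Set.Ioc (0 : ℝ) 1, (qd h).eval h = q h)
    (hcol : ∀ h ∈ Set.Ioc (0 : ℝ) 1, ∀ j : ℕ, 2 ≤ j → j ≤ n → ∀ τ ∈ ({0, h} : Set ℝ),
      (Polynomial.derivative^[j] (qd h)).eval τ =
        prolong (fun x => -deriv V x / μ) (j - 2) ((qd h).eval τ)
          ((Polynomial.derivative (qd h)).eval τ))
    (K : ℝ) (hK : 0 < K)
    (happrox : ∀ h ∈ Set.Ioc (0 : ℝ) 1, ∀ j : ℕ, 1 ≤ j → j ≤ n → ∀ τ ∈ ({0, h} : Set ℝ),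
      |(Polynomial.derivative^[j] (qd h)).eval τ - iteratedDeriv j q τ| ≤ K * h ^ (2 * n - 1)) :
    ∃ C > 0, ∃ h₀ ∈ Set.Ioc (0 : ℝ) 1, ∀ h : ℝ, 0 < h → h ≤ h₀ →
      |discreteLagrangianEM n μ V qd h -
          ∫ t in (0:ℝ)..h, (1 / 2 * μ * (deriv q t) ^ 2 - V (q t))| ≤
        C * h ^ (2 * (n / 2) + 3) := by
  set g : ℝ → ℝ := fun t => 1 / 2 * μ * (deriv q t) ^ 2 - V (q t) with hgdef
  have hq' := contDiff_deriv_top hq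
  have hg : ContDiff ℝ (⊤ : ℕ∞) g := (contDiff_const.mul (hq'.pow 2)).sub (hV.comp hq)
  set m := n / 2 with hm
  obtain ⟨C₁, hC₁0, hC₁⟩ := em_bound g hg m
  let ι : Type := {x : ℝ × ℝ // x.1 ∈ Set.Ioc (0:ℝ) 1 ∧ x.2 ∈ ({0, x.1} : Set ℝ)}
  let e : ι → ℝ := fun i => i.1.1 ^ (2 * n - 1)
  have he0 : ∀ i, 0 ≤ e i := fun i => pow_nonneg i.2.1.1.le _
  have he1 : ∀ i, e i ≤ 1 := fun i => pow_le_one₀ i.2.1.1.le i.2.1.2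
  let p : ι → ℝ → ℝ := fun i t => (qd i.1.1).eval t
  let τ : ι → ℝ := fun i => i.1.2
  have hp : ∀ i, ContDiff ℝ (⊤ : ℕ∞) (p i) := fun i => by
    simpa using (qd i.1.1).contDiff_aeval (𝕜 := ℝ) (⊤ : ℕ∞)
  have heq : ∀ i, p i (τ i) = q (τ i) := by
    rintro ⟨⟨h, t⟩, hh, ht⟩
    rcases ht with ht | ht
    · simp only [p, τ]
      simp only at ht
      rw [ht]; exact hbc0 h hh
    · simp only [p, τ]
      simp only [Set.mem_singleton_iff] at ht
      rw [ht]; exact hbc1 h hh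
  have hnear : ∀ j, 1 ≤ j → j ≤ n → Near e (fun i => iteratedDeriv j (p i) (τ i))
      (fun i => iteratedDeriv j q (τ i)) := by
    intro j hj1 hjn
    obtain ⟨M, hM⟩ := hqb j
    refine ⟨max M K, hK.le.trans (le_max_right _ _), fun i => ⟨(hM _).trans (le_max_left _ _), ?_⟩⟩
    have h1 := happrox i.1.1 i.2.1 j hj1 hjn i.1.2 i.2.2
    simp only [p, τ]
    rw [iteratedDeriv_poly]
    exact h1.trans (mul_le_mul_of_nonneg_right (le_max_right _ _) (he0 i))
  have hp' : ∀ i, ContDiff ℝ (⊤ : ℕ∞) (deriv (p i)) := fun i => contDiff_deriv_top (hp i)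
  have hLag : ∀ i : ι, lagrangianAlong μ V (qd i.1.1) =
      fun t => 1 / 2 * μ * (deriv (p i) * deriv (p i)) t - (V ∘ p i) t := by
    intro i
    funext t
    simp [lagrangianAlong, p, pow_two]
  have hgL : g = fun t => 1 / 2 * μ * (deriv q * deriv q) t - (V ∘ q) t := by
    funext t
    simp [g, pow_two]
  have hsplit : ∀ (k : ℕ) (r : ℝ → ℝ), ContDiff ℝ (⊤ : ℕ∞) r → ∀ t,
      iteratedDeriv k (fun t => 1 / 2 * μ * (deriv r * deriv r) t - (V ∘ r) t) t =
      1 / 2 * μ * iteratedDeriv k (deriv r * deriv r) t + (-1) * iteratedDeriv k (V ∘ r) t := by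
    intro k r hr t
    have hle : ((k : ℕ) : WithTop ℕ∞) ≤ ((⊤ : ℕ∞) : WithTop ℕ∞) := by exact_mod_cast le_top
    have h1 : ContDiff ℝ k (deriv r * deriv r) :=
      ((contDiff_deriv_top hr).mul (contDiff_deriv_top hr)).of_le hle
    have h2 : ContDiff ℝ k (V ∘ r) := (hV.comp hr).of_le hle
    have h3 := iteratedDeriv_sub (contDiff_const.mul h1 :
      ContDiff ℝ k (fun t => 1 / 2 * μ * (deriv r * deriv r) t)).contDiffAt (h2.contDiffAt (x := t))
    have h4 := iteratedDeriv_const_mul (1 / 2 * μ) (h1.contDiffAt (x := t))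
    rw [h4] at h3
    rw [neg_one_mul, ← sub_eq_add_neg]
    exact h3
  have hmain : ∀ k, k + 1 ≤ n → Near e
      (fun i => iteratedDeriv k (lagrangianAlong μ V (qd i.1.1)) (τ i))
      (fun i => iteratedDeriv k g (τ i)) := by
    intro k hk
    have hd : ∀ j ≤ k, Near e (fun i => iteratedDeriv j (deriv (p i)) (τ i))
        (fun i => iteratedDeriv j (deriv q) (τ i)) := by
      intro j hj
      simpa only [iteratedDeriv_succ'] using hnear (j + 1) (by omega) (by omega)
    have n1 := Near.deriv_mul he0 he1 (b := fun _ => deriv q) (b' := fun _ => deriv q) k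
      hp' hp' (fun _ => hq') (fun _ => hq') hd hd
    have n2 := Near.deriv_comp he0 he1 n hp hq heq hnear k (by omega) V hV hVb
    have n3 := (n1.const_mul (1 / 2 * μ)).add (n2.const_mul (-1))
    simp only [hLag, hgL, hsplit k _ (hp _), hsplit k _ hq]
    exact n3
  have hend : ∀ k, ∃ D : ℝ, 0 ≤ D ∧ (k + 1 ≤ n → ∀ h ∈ Set.Ioc (0:ℝ) 1, ∀ t ∈ ({0, h} : Set ℝ),
      |iteratedDeriv k (lagrangianAlong μ V (qd h)) t - iteratedDeriv k g t| ≤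
        D * h ^ (2 * n - 1)) := by
    intro k
    by_cases hk : k + 1 ≤ n
    · obtain ⟨D, hD0, hD⟩ := hmain k hk
      exact ⟨D, hD0, fun _ h hh t ht => (hD ⟨(h, t), hh, ht⟩).2⟩
    · exact ⟨0, le_rfl, fun h => absurd h hk⟩
  choose D hD0 hD using hend
  let S : ℝ := ∑ l ∈ Finset.Icc 1 m,
    |(bernoulli (2 * l) : ℝ) / (Nat.factorial (2 * l))| * (2 * D (2 * l - 1))
  have hS0 : 0 ≤ S := Finset.sum_nonneg fun l _ =>
    mul_nonneg (abs_nonneg _) (mul_nonneg zero_le_two (hD0 _))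
  refine ⟨C₁ + D 0 + S + 1, by have := hD0 0; positivity, 1, by simp, fun h h0 h1 => ?_⟩
  have hh : h ∈ Set.Ioc (0:ℝ) 1 := ⟨h0, h1⟩
  have hpow : h ^ (2 * n) ≤ h ^ (2 * m + 3) := pow_le_pow_of_le_one h0.le h1 (by omega)
  have hpe : h * h ^ (2 * n - 1) = h ^ (2 * n) := by
    rw [← pow_succ']; congr 1; omega
  have hP0 : 0 ≤ h ^ (2 * n - 1) := by positivity
  set ℓ := lagrangianAlong μ V (qd h) with hℓ
  have b1 : |h / 2 * (ℓ 0 + ℓ h) - h / 2 * (g 0 + g h)| ≤ D 0 * h ^ (2 * m + 3) := by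
    have a1 := hD 0 (by omega) h hh 0 (by simp)
    have a2 := hD 0 (by omega) h hh h (by simp)
    simp only [iteratedDeriv_zero] at a1 a2
    have : h / 2 * (ℓ 0 + ℓ h) - h / 2 * (g 0 + g h) =
      h / 2 * ((ℓ 0 - g 0) + (ℓ h - g h)) := by ring
    rw [this, abs_mul, abs_of_pos (by positivity)]
    calc h / 2 * |(ℓ 0 - g 0) + (ℓ h - g h)|
        ≤ h / 2 * (D 0 * h ^ (2 * n - 1) + D 0 * h ^ (2 * n - 1)) := by
          gcongr
          exact (abs_add_le _ _).trans (add_le_add a1 a2)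
      _ = D 0 * (h * h ^ (2 * n - 1)) := by ring
      _ ≤ _ := by
          rw [hpe]
          exact mul_le_mul_of_nonneg_left hpow (hD0 0)
  have b2 : |∑ l ∈ Finset.Icc 1 m, (bernoulli (2 * l) : ℝ) / (Nat.factorial (2 * l)) * h ^ (2 * l) *
        (iteratedDeriv (2 * l - 1) ℓ h - iteratedDeriv (2 * l - 1) ℓ 0) -
      ∑ l ∈ Finset.Icc 1 m, (bernoulli (2 * l) : ℝ) / (Nat.factorial (2 * l)) * h ^ (2 * l) *
        (iteratedDeriv (2 * l - 1) g h - iteratedDeriv (2 * l - 1) g 0)| ≤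
      S * h ^ (2 * m + 3) := by
    rw [← Finset.sum_sub_distrib, Finset.sum_mul]
    refine (Finset.abs_sum_le_sum_abs _ _).trans (Finset.sum_le_sum fun l hl => ?_)
    obtain ⟨hl1, hlm⟩ := Finset.mem_Icc.mp hl
    have a1 := hD (2 * l - 1) (by omega) h hh 0 (by simp)
    have a2 := hD (2 * l - 1) (by omega) h hh h (by simp)
    rw [← mul_sub, abs_mul, abs_mul, abs_of_pos (pow_pos h0 (2 * l))]
    have a3 : |iteratedDeriv (2 * l - 1) ℓ h - iteratedDeriv (2 * l - 1) ℓ 0 -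
        (iteratedDeriv (2 * l - 1) g h - iteratedDeriv (2 * l - 1) g 0)| ≤
        2 * D (2 * l - 1) * h ^ (2 * n - 1) := by
      rw [sub_sub_sub_comm]
      refine (abs_sub _ _).trans ?_
      linarith
    have a4 : h ^ (2 * l) ≤ h := by
      simpa using pow_le_pow_of_le_one h0.le h1 (show 1 ≤ 2 * l by omega)
    have hDl := hD0 (2 * l - 1)
    rw [mul_assoc, mul_assoc]
    refine mul_le_mul_of_nonneg_left ?_ (abs_nonneg _)
    calc _ ≤ h * (2 * D (2 * l - 1) * h ^ (2 * n - 1)) :=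
          mul_le_mul a4 a3 (abs_nonneg _) h0.le
      _ = 2 * D (2 * l - 1) * (h * h ^ (2 * n - 1)) := by ring
      _ ≤ _ := by
          rw [hpe]
          exact mul_le_mul_of_nonneg_left hpow (by positivity)
  have b3 := hC₁ h h0 h1
  have hdef : discreteLagrangianEM n μ V qd h = h / 2 * (ℓ 0 + ℓ h) -
    ∑ l ∈ Finset.Icc 1 m, (bernoulli (2 * l) : ℝ) / (Nat.factorial (2 * l)) * h ^ (2 * l) *
        (iteratedDeriv (2 * l - 1) ℓ h - iteratedDeriv (2 * l - 1) ℓ 0) := rfl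
  rw [hdef]
  have hX : 0 < h ^ (2 * m + 3) := by positivity
  have hexp : (C₁ + D 0 + S + 1) * h ^ (2 * m + 3) = C₁ * h ^ (2 * m + 3) + D 0 * h ^ (2 * m + 3)
    + S * h ^ (2 * m + 3) + h ^ (2 * m + 3) := by ring
  rw [hexp]
  rw [abs_le] at b1 b2 b3 ⊢
  constructor <;> linarith [b1.1, b1.2, b2.1, b2.2, b3.1, b3.2]
end
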